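/- arXiv:1112.6160 — 2 statements merged into one kernel-verified Lean document; each statement's English description precedes it below -/
import Mathlib

section
/- Let E be a finite-dimensional real inner product space, let K, L ⊆ E be nonempty compact sets, δ > 0 with hausdorffDist K L ≤ δ, μ ∈ [0,1), and let x ∉ K be a μ-critical point of d_K. Let C satisfy μ < C ≤ 1 and C ≥ μ + 2·√(δ/d_K(x)). Then there exists y ∉ L which is a C-critical point of d_L, with d_L(y) ≥ d_L(x) and dist(x,y) ≤ 4δ/(C−μ). -/
open Metric

/-!
The point `y` comes from the Ekeland variational principle, applied to `d_L` with slope `C` on the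
closed ball of radius `R = 4δ / (C - μ)` around `x`: it satisfies `d_L x + C * dist x y ≤ d_L y`,
and from `y` the function `d_L` grows in the ball with slope less than `C`. At a point in the
interior of the ball the latter property means that `y` is `C`-critical, because `d_L` grows in the
direction pointing away from the convex hull of the nearest points with slope equal to the norm of
its gradient. The point `y` is not on the boundary sphere: `μ`-criticality of `x` gives
`d_K y ^ 2 ≤ d_K x ^ 2 + 2 * μ * d_K x * dist x y + dist x y ^ 2`, so up to distance `R` the slope
of `d_K` from `x` stays below the mean of `μ` and `C`, and passing from `d_L` to `d_K` costs at most
`2 * δ = (C - μ) / 2 * R`.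
-/

open Set Filter Topology

section Ekeland

/-- The points reached from `x` by increasing `f` with slope at least `c`. These sets are the upper
sets of the order used in the proof of the Ekeland variational principle. -/
def ascentSet {X : Type*} [PseudoMetricSpace X] (f : X → ℝ) (c : ℝ) (x : X) : Set X :=
  {y | f x + c * dist x y ≤ f y}

section PseudoMetricSpace

variable {X : Type*} [PseudoMetricSpace X] {f : X → ℝ} {c : ℝ}

theorem self_mem_ascentSet (f : X → ℝ) (c : ℝ) (x : X) : x ∈ ascentSet f c x := by
  simp [ascentSet]

theorem ascentSet_subset (hc : 0 ≤ c) {x y : X} (hy : y ∈ ascentSet f c x) :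
    ascentSet f c y ⊆ ascentSet f c x := by
  intro z (hz : f y + c * dist y z ≤ f z)
  have htri := mul_le_mul_of_nonneg_left (dist_triangle x y z) hc
  change f x + c * dist x y ≤ f y at hy
  change f x + c * dist x z ≤ f z
  linarith

theorem isClosed_ascentSet (hf : UpperSemicontinuous f) (c : ℝ) (x : X) :
    IsClosed (ascentSet f c x) := by
  have hcont : Continuous fun y => -(c * dist x y) := by fun_prop
  convert (hf.add hcont.upperSemicontinuous).isClosed_preimage (f x) using 1
  ext y
  simp only [ascentSet, mem_ofPred_eq, mem_preimage, mem_Ici, ← sub_eq_add_neg, le_sub_iff_add_le]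

theorem exists_mem_ascentSet_forall_dist_le (hf : BddAbove (range f)) (hc : 0 < c) {ε : ℝ}
    (hε : 0 < ε) (x : X) :
    ∃ y ∈ ascentSet f c x, ∀ z ∈ ascentSet f c y, dist y z ≤ ε := by
  have hne : (f '' ascentSet f c x).Nonempty := ⟨_, mem_image_of_mem f (self_mem_ascentSet f c x)⟩
  obtain ⟨_, ⟨y, hy, rfl⟩, hsup⟩ := exists_lt_of_lt_csSup hne (sub_lt_self _ (mul_pos hc hε))
  refine ⟨y, hy, fun z hz => le_of_mul_le_mul_left ?_ hc⟩
  have hzsup : f z ≤ sSup (f '' ascentSet f c x) :=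
    le_csSup (hf.mono (image_subset_range _ _))
      (mem_image_of_mem f (ascentSet_subset hc.le hy hz))
  change f y + c * dist y z ≤ f z at hz
  linarith

theorem exists_seq_ascentSet_forall_dist_le (hf : BddAbove (range f)) (hc : 0 < c) (x : X) :
    ∃ u : ℕ → X, u 0 ∈ ascentSet f c x ∧ Antitone (fun n => ascentSet f c (u n)) ∧
      ∀ n, ∀ z ∈ ascentSet f c (u n), dist (u n) z ≤ (1 / 2) ^ n := by
  choose next next_mem dist_next using fun (n : ℕ) (y : X) =>
    exists_mem_ascentSet_forall_dist_le hf hc (ε := (1 / 2) ^ n) (by positivity) y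
  let u : ℕ → X := Nat.rec (next 0 x) fun n => next (n + 1)
  refine ⟨u, next_mem 0 x,
    antitone_nat_of_succ_le fun n => ascentSet_subset hc.le (next_mem (n + 1) (u n)), ?_⟩
  rintro (_ | n)
  exacts [dist_next 0 x, dist_next (n + 1) (u n)]

end PseudoMetricSpace

variable {X : Type*} [MetricSpace X] [CompleteSpace X] {f : X → ℝ} {c : ℝ}

/-- The **Ekeland variational principle**, for maximization. -/
theorem exists_forall_ne_lt_add_mul_dist (hf : UpperSemicontinuous f) (hbdd : BddAbove (range f))
    (hc : 0 < c) (x : X) :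
    ∃ y, f x + c * dist x y ≤ f y ∧ ∀ z ≠ y, f z < f y + c * dist y z := by
  obtain ⟨u, hu_zero, hu_anti, hu_dist⟩ := exists_seq_ascentSet_forall_dist_le hbdd hc x
  have hpow : Tendsto (fun n : ℕ => (1 / 2 : ℝ) ^ n) atTop (𝓝 0) :=
    tendsto_pow_atTop_nhds_zero_of_lt_one (by norm_num) (by norm_num)
  have hu_mem {n m : ℕ} (hnm : n ≤ m) : u m ∈ ascentSet f c (u n) :=
    hu_anti hnm (self_mem_ascentSet f c (u m))
  obtain ⟨y, hy⟩ := cauchySeq_tendsto_of_complete <|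
    cauchySeq_of_le_tendsto_0' _ (fun n m hnm => hu_dist n (u m) (hu_mem hnm)) hpow
  have hy_mem (n : ℕ) : y ∈ ascentSet f c (u n) :=
    (isClosed_ascentSet hf c (u n)).mem_of_tendsto hy (eventually_atTop.2 ⟨n, fun _ => hu_mem⟩)
  refine ⟨y, ascentSet_subset hc.le hu_zero (hy_mem 0), fun z hzy => ?_⟩
  by_contra! hz
  have hz_mem (n : ℕ) : z ∈ ascentSet f c (u n) := ascentSet_subset hc.le (hy_mem n) hz
  have hu_z : Tendsto u atTop (𝓝 z) :=
    tendsto_iff_dist_tendsto_zero.2 <|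
      squeeze_zero (fun _ => dist_nonneg) (fun n => hu_dist n z (hz_mem n)) hpow
  exact hzy (tendsto_nhds_unique hu_z hy)

theorem exists_mem_ball_eventually_lt_add_mul_dist {x : X} {R : ℝ} (hR : 0 ≤ R)
    (hf : UpperSemicontinuousOn f (closedBall x R)) (hbdd : BddAbove (f '' closedBall x R))
    (hc : 0 < c) (hsphere : ∀ y ∈ sphere x R, f y < f x + c * dist x y) :
    ∃ y ∈ ball x R, f x + c * dist x y ≤ f y ∧ ∀ᶠ z in 𝓝[≠] y, f z < f y + c * dist y z := by
  have : CompleteSpace (closedBall x R) := isClosed_closedBall.completeSpace_coe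
  obtain ⟨⟨y, hyR⟩, hxy, hmax⟩ := exists_forall_ne_lt_add_mul_dist
    (upperSemicontinuousOn_iff_restrict.2 hf) (by rwa [range_domRestrict]) hc
    ⟨x, mem_closedBall_self hR⟩
  have hy : y ∈ ball x R :=
    lt_of_le_of_ne hyR fun hyR => (hsphere y hyR).not_ge hxy
  refine ⟨y, hy, hxy, eventually_nhdsWithin_iff.2 ?_⟩
  filter_upwards [isOpen_ball.mem_nhds hy] with z hz hzy
  exact hmax ⟨z, ball_subset_closedBall hz⟩ fun h => hzy (congrArg Subtype.val h)

end Ekeland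

section NearestPoints

/-- The set `Γ_K(x)` of points of `K` closest to `x`. The distance from `x` to its convex hull,
divided by `infDist x K`, is the norm of the generalized gradient of `infDist · K` at `x`. -/
def nearestPoints {X : Type*} [PseudoMetricSpace X] (K : Set X) (x : X) : Set X :=
  {q ∈ K | dist x q = infDist x K}

variable {X : Type*}

section PseudoMetricSpace

variable [PseudoMetricSpace X] {K : Set X}

theorem nonempty_nearestPoints (hK : IsCompact K) (hne : K.Nonempty) (x : X) :
    (nearestPoints K x).Nonempty :=
  let ⟨q, hq, hxq⟩ := hK.exists_infDist_eq_dist hne x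
  ⟨q, hq, hxq.symm⟩

theorem eventually_nearestPoints_subset (hK : IsCompact K) {x : X} {U : Set X} (hU : IsOpen U)
    (hxU : nearestPoints K x ⊆ U) : ∀ᶠ y in 𝓝 x, nearestPoints K y ⊆ U := by
  rcases (K \ U).eq_empty_or_nonempty with hempty | hne
  · exact .of_forall fun y q hq => sdiff_eq_empty.1 hempty hq.1
  obtain ⟨p, hp, hxp⟩ := (hK.diff hU).exists_infDist_eq_dist hne x
  have hlt : infDist x K < infDist x (K \ U) := by
    rw [hxp]
    exact lt_of_le_of_ne (infDist_le_dist_of_mem hp.1) fun h => hp.2 (hxU ⟨hp.1, h.symm⟩)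
  filter_upwards [(continuous_infDist_pt K).continuousAt.eventually_lt
    (continuous_infDist_pt (K \ U)).continuousAt hlt] with y hy q hq
  by_contra hqU
  exact (hq.2.trans_lt hy).not_ge (infDist_le_dist_of_mem ⟨hq.1, hqU⟩)

end PseudoMetricSpace

theorem infDist_pos_of_nonempty_nearestPoints [MetricSpace X] {K : Set X} {x : X} (hx : x ∉ K)
    (hne : (nearestPoints K x).Nonempty) : 0 < infDist x K := by
  obtain ⟨q, hqK, hq⟩ := hne
  exact hq ▸ dist_pos.2 fun h => hx (h ▸ hqK)

theorem infDist_convexHull_nearestPoints_le {E : Type*} [SeminormedAddCommGroup E]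
    [NormedSpace ℝ E] {K : Set E} {x : E} (hne : (nearestPoints K x).Nonempty) :
    infDist x (convexHull ℝ (nearestPoints K x)) ≤ infDist x K :=
  let ⟨_, hq⟩ := hne
  (infDist_le_dist_of_mem (subset_convexHull ℝ _ hq)).trans_eq hq.2

end NearestPoints

theorem abs_infDist_sub_infDist_le_hausdorffDist {X : Type*} [PseudoMetricSpace X] {s t : Set X}
    (hfin : hausdorffEDist s t ≠ ⊤) (x : X) :
    |infDist x s - infDist x t| ≤ hausdorffDist s t := by
  have hst : infDist x t ≤ infDist x s + hausdorffDist s t :=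
    infDist_le_infDist_add_hausdorffDist hfin
  have hts : infDist x s ≤ infDist x t + hausdorffDist t s :=
    infDist_le_infDist_add_hausdorffDist (hausdorffEDist_comm (s := s) ▸ hfin)
  rw [hausdorffDist_comm] at hts
  exact abs_sub_le_iff.2 ⟨by linarith, by linarith⟩

theorem tendsto_add_smul_nhdsGT_zero {E : Type*} [AddCommGroup E] [Module ℝ E] [TopologicalSpace E]
    [ContinuousAdd E] [ContinuousSMul ℝ E] (y v : E) :
    Tendsto (fun t : ℝ => y + t • v) (𝓝[>] 0) (𝓝 y) :=
  tendsto_nhdsWithin_of_tendsto_nhds <| Continuous.tendsto' (by fun_prop) _ _ (by simp)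

theorem four_mul_le_sq_mul_of_two_mul_sqrt_div_le {δ r a : ℝ} (hr : 0 < r)
    (h : 2 * √(δ / r) ≤ a) : 4 * δ ≤ a ^ 2 * r := by
  have ha : 0 ≤ a / 2 := by linarith [Real.sqrt_nonneg (δ / r)]
  have hsq : δ / r ≤ (a / 2) ^ 2 := (Real.sqrt_le_left ha).1 (by linarith)
  linarith [(div_le_iff₀ hr).1 hsq]

section InnerProductSpace

variable {E : Type*} [NormedAddCommGroup E] [InnerProductSpace ℝ E] {K L : Set E} {x y : E}

theorem exists_inner_le_of_mem_convexHull {s : Set E} {p : E} (hp : p ∈ convexHull ℝ s) (v : E) :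
    ∃ q ∈ s, inner ℝ v p ≤ inner ℝ v q :=
  ((innerₛₗ ℝ v).convexOn convex_univ).exists_ge_of_mem_convexHull (subset_univ s) hp

theorem infDist_sq_le_of_mem_convexHull {p : E} (hp : p ∈ convexHull ℝ (nearestPoints K x))
    (y : E) :
    infDist y K ^ 2 ≤ infDist x K ^ 2 + 2 * dist x y * dist x p + dist x y ^ 2 := by
  obtain ⟨q, ⟨hqK, hxq⟩, hpq⟩ := exists_inner_le_of_mem_convexHull hp (y - x)
  have hinner : inner ℝ (y - x) (x - q) ≤ dist x y * dist x p :=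
    calc inner ℝ (y - x) (x - q) ≤ inner ℝ (y - x) (x - p) := by
          rw [inner_sub_right, inner_sub_right]
          gcongr
      _ ≤ ‖y - x‖ * ‖x - p‖ := real_inner_le_norm _ _
      _ = dist x y * dist x p := by rw [dist_eq_norm', dist_eq_norm x p]
  calc infDist y K ^ 2 ≤ dist y q ^ 2 :=
        pow_le_pow_left₀ infDist_nonneg (infDist_le_dist_of_mem hqK) 2
    _ = dist x q ^ 2 + 2 * inner ℝ (y - x) (x - q) + dist x y ^ 2 := by
        rw [dist_eq_norm y q, dist_eq_norm x q, dist_eq_norm' x y, ← sub_add_sub_cancel y x q,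
          norm_add_sq_real]
        ring
    _ ≤ infDist x K ^ 2 + 2 * dist x y * dist x p + dist x y ^ 2 := by
        rw [hxq]
        linarith

theorem infDist_sq_le_of_nonempty_nearestPoints (hne : (nearestPoints K x).Nonempty) (y : E) :
    infDist y K ^ 2 ≤ infDist x K ^ 2 +
      2 * dist x y * infDist x (convexHull ℝ (nearestPoints K x)) + dist x y ^ 2 := by
  rcases eq_or_ne x y with rfl | hxy
  · simp
  have hpos : 0 < 2 * dist x y := mul_pos two_pos (dist_pos.2 hxy)
  have hle : (infDist y K ^ 2 - infDist x K ^ 2 - dist x y ^ 2) / (2 * dist x y) ≤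
      infDist x (convexHull ℝ (nearestPoints K x)) := by
    refine (le_infDist hne.convexHull).2 fun {p} hp => (div_le_iff₀' hpos).2 ?_
    linarith [infDist_sq_le_of_mem_convexHull hp y]
  linarith [(div_le_iff₀' hpos).1 hle]

theorem infDist_lt_add_mul_dist (hne : (nearestPoints K x).Nonempty) {μ c : ℝ}
    (hcrit : infDist x (convexHull ℝ (nearestPoints K x)) ≤ μ * infDist x K) (hμc : μ < c)
    (hxy : x ≠ y) (hdist : dist x y ≤ 2 * (c - μ) * infDist x K) :
    infDist y K < infDist x K + c * dist x y := by
  have ht : 0 < dist x y := dist_pos.2 hxy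
  have hr : 0 < infDist x K :=
    pos_of_mul_pos_right (ht.trans_le hdist) (by linarith)
  have hc : 0 < c := (nonneg_of_mul_nonneg_left (infDist_nonneg.trans hcrit) hr).trans_lt hμc
  refine lt_of_pow_lt_pow_left₀ 2 (by positivity) ?_
  calc infDist y K ^ 2
      ≤ infDist x K ^ 2 + 2 * dist x y * (μ * infDist x K) + dist x y ^ 2 := by
        grw [infDist_sq_le_of_nonempty_nearestPoints hne y, hcrit]
    _ ≤ infDist x K ^ 2 + 2 * dist x y * (c * infDist x K) := by
        linarith [mul_le_mul_of_nonneg_left hdist ht.le]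
    _ < infDist x K ^ 2 + 2 * dist x y * (c * infDist x K) + (c * dist x y) ^ 2 :=
        lt_add_of_pos_right _ (by positivity)
    _ = (infDist x K + c * dist x y) ^ 2 := by ring

theorem exists_norm_eq_infDist_convexHull [CompleteSpace E] {s : Set E} (hs : s.Nonempty) (y : E) :
    ∃ v : E, ‖v‖ = infDist y (convexHull ℝ s) ∧ ∀ q ∈ s, ‖v‖ ^ 2 ≤ inner ℝ v (y - q) := by
  have hconv : Convex ℝ (closure (convexHull ℝ s)) := (convex_convexHull ℝ s).closure
  obtain ⟨p, hp, hyp⟩ := exists_norm_eq_iInf_of_complete_convex hs.convexHull.closure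
    isClosed_closure.isComplete hconv y
  refine ⟨y - p, ?_, fun q hq => ?_⟩
  · simp only [hyp, ← infDist_closure (s := convexHull ℝ s), infDist_eq_iInf, dist_eq_norm]
  · have hobtuse := (norm_eq_iInf_iff_real_inner_le_zero hconv hp).1 hyp q
      (subset_closure (subset_convexHull ℝ s hq))
    rw [← sub_sub_sub_cancel_right y q p, inner_sub_right, real_inner_self_eq_norm_sq]
    linarith

theorem eventually_le_infDist_sq (hL : IsCompact L) (hne : L.Nonempty) {v : E} {a : ℝ}
    (ha : ∀ q ∈ nearestPoints L y, a < inner ℝ v (y - q)) :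
    ∀ᶠ t : ℝ in 𝓝[>] 0,
      infDist y L ^ 2 + 2 * t * a + (t * ‖v‖) ^ 2 ≤ infDist (y + t • v) L ^ 2 := by
  have hopen : IsOpen {q | a < inner ℝ v (y - q)} := isOpen_lt (by fun_prop) (by fun_prop)
  filter_upwards [(tendsto_add_smul_nhdsGT_zero y v).eventually
    (eventually_nearestPoints_subset hL hopen ha),
    self_mem_nhdsWithin] with t hsub (ht : 0 < t)
  obtain ⟨q, hq⟩ := nonempty_nearestPoints hL hne (y + t • v)
  calc infDist y L ^ 2 + 2 * t * a + (t * ‖v‖) ^ 2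
      ≤ dist y q ^ 2 + 2 * t * inner ℝ v (y - q) + (t * ‖v‖) ^ 2 := by
        have hyq : infDist y L ≤ dist y q := infDist_le_dist_of_mem hq.1
        have hav : a < inner ℝ v (y - q) := hsub hq
        gcongr
        exact infDist_nonneg
    _ = dist (y + t • v) q ^ 2 := by
        rw [dist_eq_norm, dist_eq_norm, add_sub_right_comm, norm_add_sq_real, norm_smul,
          Real.norm_of_nonneg ht.le, real_inner_smul_right, real_inner_comm]
        ring
    _ = infDist (y + t • v) L ^ 2 := by rw [hq.2]

theorem infDist_convexHull_nearestPoints_le_of_eventually_lt [CompleteSpace E] (hL : IsCompact L)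
    (hne : L.Nonempty) {C : ℝ} (hC : 0 ≤ C)
    (hslope : ∀ᶠ z in 𝓝[≠] y, infDist z L < infDist y L + C * dist y z) :
    infDist y (convexHull ℝ (nearestPoints L y)) ≤ C * infDist y L := by
  by_contra! hlt
  have hΓ := nonempty_nearestPoints hL hne y
  have hC1 : C ≤ 1 := by
    by_contra! hC1
    exact hlt.not_ge <| (infDist_convexHull_nearestPoints_le hΓ).trans <|
      le_mul_of_one_le_left infDist_nonneg hC1.le
  obtain ⟨v, hv, hvq⟩ := exists_norm_eq_infDist_convexHull hΓ y
  rw [← hv] at hlt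
  have hv_pos : 0 < ‖v‖ := (mul_nonneg hC infDist_nonneg).trans_lt hlt
  have hinner : ∀ q ∈ nearestPoints L y, C * infDist y L * ‖v‖ < inner ℝ v (y - q) :=
    fun q hq => (mul_lt_mul_of_pos_right hlt hv_pos).trans_le (sq ‖v‖ ▸ hvq q hq)
  have hpath : Tendsto (fun t : ℝ => y + t • v) (𝓝[>] 0) (𝓝[≠] y) := by
    refine tendsto_nhdsWithin_iff.2 ⟨tendsto_add_smul_nhdsGT_zero y v, ?_⟩
    filter_upwards [self_mem_nhdsWithin] with t (ht : 0 < t)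
    simpa using ⟨ht.ne', norm_pos_iff.1 hv_pos⟩
  obtain ⟨t, ⟨hgrow, hlt_slope⟩, (ht : 0 < t)⟩ := ((eventually_le_infDist_sq hL hne hinner).and
    (hpath.eventually hslope)).and self_mem_nhdsWithin |>.exists
  rw [dist_self_add_right, norm_smul, Real.norm_of_nonneg ht.le] at hlt_slope
  refine hlt_slope.not_ge (le_of_sq_le_sq ?_ infDist_nonneg)
  calc (infDist y L + C * (t * ‖v‖)) ^ 2
      = infDist y L ^ 2 + 2 * t * (C * infDist y L * ‖v‖) + C ^ 2 * (t * ‖v‖) ^ 2 := by ring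
    _ ≤ infDist y L ^ 2 + 2 * t * (C * infDist y L * ‖v‖) + (t * ‖v‖) ^ 2 := by
        gcongr
        exact mul_le_of_le_one_left (sq_nonneg _) (pow_le_one₀ hC hC1)
    _ ≤ infDist (y + t • v) L ^ 2 := hgrow

theorem infDist_lt_add_mul_dist_of_abs_sub_le (hne : (nearestPoints K x).Nonempty) {μ C δ : ℝ}
    (hKL : ∀ z, |infDist z K - infDist z L| ≤ δ)
    (hcrit : infDist x (convexHull ℝ (nearestPoints K x)) ≤ μ * infDist x K) (hμC : μ < C)
    (hxy : x ≠ y) (hdist : dist x y = 4 * δ / (C - μ))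
    (hδ : 4 * δ ≤ (C - μ) ^ 2 * infDist x K) :
    infDist y L < infDist x L + C * dist x y := by
  have hsub : 0 < C - μ := sub_pos.2 hμC
  have hdist_mul : dist x y * (C - μ) = 4 * δ := (eq_div_iff hsub.ne').1 hdist
  have hdist_le : dist x y ≤ 2 * ((μ + C) / 2 - μ) * infDist x K := by
    rw [hdist, div_le_iff₀ hsub]
    linarith
  have hK := infDist_lt_add_mul_dist hne hcrit (c := (μ + C) / 2) (by linarith) hxy hdist_le
  linarith [(abs_le.1 (hKL x)).2, (abs_le.1 (hKL y)).1]

end InnerProductSpace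

theorem stmt7_general {E : Type*} [NormedAddCommGroup E] [InnerProductSpace ℝ E] [CompleteSpace E]
    {K L : Set E} (hK : Bornology.IsBounded K) (hL : IsCompact L) (hLne : L.Nonempty)
    {δ : ℝ} (hδ : 0 < δ) (hH : hausdorffDist K L ≤ δ) {μ : ℝ} {x : E} (hx : x ∉ K)
    (hΓ : (nearestPoints K x).Nonempty)
    (hcrit : infDist x (convexHull ℝ (nearestPoints K x)) ≤ μ * infDist x K)
    {C : ℝ} (hC1 : C ≤ 1) (hC : μ + 2 * √(δ / infDist x K) ≤ C) :
    ∃ y ∉ L, infDist y (convexHull ℝ (nearestPoints L y)) ≤ C * infDist y L ∧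
      infDist x L ≤ infDist y L ∧ dist x y ≤ 4 * δ / (C - μ) := by
  have hr : 0 < infDist x K := infDist_pos_of_nonempty_nearestPoints hx hΓ
  have hμ : 0 ≤ μ := nonneg_of_mul_nonneg_left (infDist_nonneg.trans hcrit) hr
  have hμC : μ < C := by linarith [Real.sqrt_pos.2 (div_pos hδ hr)]
  have hδr : 4 * δ ≤ (C - μ) ^ 2 * infDist x K :=
    four_mul_le_sq_mul_of_two_mul_sqrt_div_le hr (by linarith)
  have hKL (z : E) : |infDist z K - infDist z L| ≤ δ :=
    (abs_infDist_sub_infDist_le_hausdorffDist (hausdorffEDist_ne_top_of_nonempty_of_bounded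
      (hΓ.mono fun _ hq => hq.1) hLne hK hL.isBounded) z).trans hH
  have hR : 0 < 4 * δ / (C - μ) := div_pos (by linarith) (sub_pos.2 hμC)
  obtain ⟨y, hyR, hxy, hslope⟩ := exists_mem_ball_eventually_lt_add_mul_dist hR.le
    ((continuous_infDist_pt L).upperSemicontinuous.upperSemicontinuousOn _)
    ((lipschitz_infDist_pt L).isBounded_image isBounded_closedBall).bddAbove (hμ.trans_lt hμC)
    fun y hy => infDist_lt_add_mul_dist_of_abs_sub_le hΓ hKL hcrit hμC
      (ne_of_mem_sphere hy hR.ne').symm (mem_sphere'.1 hy) hδr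
  have hLxy : infDist x L ≤ infDist y L :=
    (le_add_of_nonneg_right (mul_nonneg (hμ.trans hμC.le) dist_nonneg)).trans hxy
  refine ⟨y, fun hyL => ?_, infDist_convexHull_nearestPoints_le_of_eventually_lt hL hLne
    (hμ.trans hμC.le) hslope, hLxy, (mem_ball'.1 hyR).le⟩
  have hrδ : 4 * δ ≤ infDist x K := hδr.trans <|
    mul_le_of_le_one_left hr.le (pow_le_one₀ (by linarith) (by linarith))
  rw [infDist_zero_of_mem hyL] at hLxy
  linarith [(abs_le.1 (hKL x)).2]

/-- Stability of μ-critical points (Euclidean case): if `d_H(K,L) ≤ δ` and `x ∉ K` is a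
μ-critical point of `d_K`, then for suitable `C` there is a `C`-critical point `y` of `d_L`
with `d_L(y) ≥ d_L(x)` and `dist(x,y) ≤ 4δ/(C−μ)`. -/
theorem stmt7 {E : Type*} [NormedAddCommGroup E] [InnerProductSpace ℝ E]
    [FiniteDimensional ℝ E]
    (K L : Set E) (hKne : K.Nonempty) (hKc : IsCompact K)
    (hLne : L.Nonempty) (hLc : IsCompact L)
    (δ : ℝ) (hδ : 0 < δ) (hH : hausdorffDist K L ≤ δ)
    (μ : ℝ) (hμ : μ ∈ Set.Ico (0 : ℝ) 1) (x : E) (hx : x ∉ K)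
    (hcrit : infDist x (convexHull ℝ {q ∈ K | dist x q = infDist x K}) ≤ μ * infDist x K)
    (C : ℝ) (hC1 : μ < C) (hC2 : C ≤ 1)
    (hC3 : μ + 2 * Real.sqrt (δ / infDist x K) ≤ C) :
    ∃ y : E, y ∉ L ∧
      infDist y (convexHull ℝ {q ∈ L | dist y q = infDist y L}) ≤ C * infDist y L ∧
      infDist x L ≤ infDist y L ∧ dist x y ≤ 4 * δ / (C - μ) :=
  stmt7_general hKc.isBounded hLc hLne hδ hH hx (nonempty_nearestPoints hKc hKne x) hcrit hC2 hC3
end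

section
/- Let E be a finite-dimensional real inner product space and let S be a nonempty compact set of unit vectors in E. Then 0 ∉ convexHull ℝ S if and only if there exist a unit vector w ∈ E and β ∈ [0, π/2) such that angle(v, w) ≤ β for all v ∈ S. -/
open Real InnerProductGeometry

/-!
The point `p` of `convexHull ℝ S` nearest to `0` satisfies `‖p‖ ^ 2 ≤ ⟪v, p⟫` for all `v ∈ S`, so
when `p ≠ 0` and `S` lies in the ball of radius `R`, every `v ∈ S` makes an angle of at most
`arccos (‖p‖ / R) < π / 2` with `p`. The nearest point exists because, by Carathéodory, the convex
hull of a compact set in finite dimension is a finite union of continuous images of compact sets.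
Conversely, an acute cone around `w` lies in the open half-space `0 < ⟪v, w⟫`, which is convex and
misses `0`.
-/

section ConvexHull

variable {𝕜 E : Type*} [Field 𝕜] [LinearOrder 𝕜] [IsStrictOrderedRing 𝕜]
  [AddCommGroup E] [Module 𝕜 E] [FiniteDimensional 𝕜 E]

theorem convexHull_eq_iUnion_image_stdSimplex_prod_pi (S : Set E) :
    convexHull 𝕜 S = ⋃ n ∈ Set.Iic (Module.finrank 𝕜 E + 1),
      (fun p : (Fin n → 𝕜) × (Fin n → E) ↦ ∑ i, p.1 i • p.2 i) ''
        stdSimplex 𝕜 (Fin n) ×ˢ Set.univ.pi fun _ ↦ S := by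
  refine Set.Subset.antisymm (fun x hx ↦ ?_) (Set.iUnion₂_subset fun n _ ↦ ?_)
  · obtain ⟨ι, _, z, w, hz, hz_indep, hw_pos, hw_sum, rfl⟩ :=
      eq_pos_convex_span_of_mem_convexHull hx
    have hcard : Fintype.card ι ≤ Module.finrank 𝕜 E + 1 :=
      hz_indep.card_le_finrank_succ.trans (Nat.succ_le_succ (Submodule.finrank_le _))
    let e := (Fintype.equivFin ι).symm
    refine Set.mem_biUnion hcard ⟨(w ∘ e, z ∘ e), ⟨⟨fun i ↦ (hw_pos _).le, ?_⟩, ?_⟩, ?_⟩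
    · exact (e.sum_comp w).trans hw_sum
    · exact fun i _ ↦ hz ⟨e i, rfl⟩
    · exact e.sum_comp fun i ↦ w i • z i
  · rintro _ ⟨⟨w, z⟩, ⟨⟨hw_nonneg, hw_sum⟩, hz⟩, rfl⟩
    exact mem_convexHull_of_exists_fintype w z hw_nonneg hw_sum (fun i ↦ hz i trivial) rfl

theorem isCompact_convexHull_of_finiteDimensional [TopologicalSpace 𝕜] [OrderClosedTopology 𝕜]
    [CompactIccSpace 𝕜] [ContinuousAdd 𝕜] [TopologicalSpace E] [ContinuousAdd E]
    [ContinuousSMul 𝕜 E] {S : Set E} (hS : IsCompact S) : IsCompact (convexHull 𝕜 S) := by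
  rw [convexHull_eq_iUnion_image_stdSimplex_prod_pi]
  refine (Set.finite_Iic _).isCompact_biUnion fun n _ ↦ ?_
  exact ((isCompact_stdSimplex 𝕜 (Fin n)).prod (isCompact_univ_pi fun _ ↦ hS)).image (by fun_prop)

end ConvexHull

section InnerProductSpace

variable {E : Type*} [NormedAddCommGroup E] [InnerProductSpace ℝ E]

theorem exists_mem_forall_norm_sq_le_inner {K : Set E} (hne : K.Nonempty) (hcomplete : IsComplete K)
    (hconvex : Convex ℝ K) : ∃ p ∈ K, ∀ x ∈ K, ‖p‖ ^ 2 ≤ inner ℝ x p := by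
  obtain ⟨p, hp, hmin⟩ := exists_norm_eq_iInf_of_complete_convex hne hcomplete hconvex 0
  refine ⟨p, hp, fun x hx ↦ ?_⟩
  have hobtuse : inner ℝ (0 - p) (x - p) ≤ 0 :=
    (norm_eq_iInf_iff_real_inner_le_zero hconvex hp).1 hmin x hx
  rw [zero_sub, inner_neg_left, inner_sub_right, real_inner_self_eq_norm_sq,
    real_inner_comm] at hobtuse
  linarith

theorem zero_notMem_convexHull_of_forall_inner_pos {S : Set E} {w : E}
    (h : ∀ v ∈ S, 0 < inner ℝ w v) : (0 : E) ∉ convexHull ℝ S := by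
  have hsub : convexHull ℝ S ⊆ {x | 0 < inner ℝ w x} :=
    convexHull_min h (convex_halfSpace_gt (innerₛₗ ℝ w).isLinear 0)
  intro h0
  simpa using hsub h0

theorem inner_pos_of_angle_lt_pi_div_two {x y : E} (h : angle x y < π / 2) :
    0 < inner ℝ x y := by
  have hcos : 0 < inner ℝ x y / (‖x‖ * ‖y‖) := arccos_lt_pi_div_two.1 h
  exact pos_of_mul_pos_left hcos (by positivity)

theorem angle_le_arccos_of_mul_norm_le_inner {x y : E} {c : ℝ} (hx : x ≠ 0) (hy : y ≠ 0)
    (h : c * (‖x‖ * ‖y‖) ≤ inner ℝ x y) : angle x y ≤ arccos c :=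
  arccos_le_arccos ((le_div_iff₀ (by positivity)).2 h)

theorem exists_forall_angle_le_of_forall_norm_sq_le_inner {S : Set E} {p : E}
    (hbdd : Bornology.IsBounded S) (h0 : (0 : E) ∉ S) (hp : p ≠ 0)
    (h : ∀ v ∈ S, ‖p‖ ^ 2 ≤ inner ℝ v p) :
    ∃ β ∈ Set.Ico (0 : ℝ) (π / 2), ∀ v ∈ S, angle v p ≤ β := by
  obtain ⟨R, hR, hSR⟩ := hbdd.exists_pos_norm_le
  refine ⟨arccos (‖p‖ / R), ⟨arccos_nonneg _, arccos_lt_pi_div_two.2 (by positivity)⟩,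
    fun v hv ↦ angle_le_arccos_of_mul_norm_le_inner (ne_of_mem_of_not_mem hv h0) hp ?_⟩
  calc ‖p‖ / R * (‖v‖ * ‖p‖) ≤ ‖p‖ / R * (R * ‖p‖) := by gcongr; exact hSR v hv
    _ = ‖p‖ ^ 2 := by field_simp
    _ ≤ inner ℝ v p := h v hv

theorem stmt17_general {S : Set E} (hne : S.Nonempty) (hbdd : Bornology.IsBounded S)
    (hcomplete : IsComplete (convexHull ℝ S)) (h0 : (0 : E) ∉ S) :
    (0 : E) ∉ convexHull ℝ S ↔
      ∃ w : E, ‖w‖ = 1 ∧ ∃ β ∈ Set.Ico (0 : ℝ) (π / 2), ∀ v ∈ S, angle v w ≤ β := by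
  constructor
  · intro hhull
    obtain ⟨p, hp_mem, hp⟩ :=
      exists_mem_forall_norm_sq_le_inner hne.convexHull hcomplete (convex_convexHull ℝ S)
    have hp_ne : p ≠ 0 := ne_of_mem_of_not_mem hp_mem hhull
    obtain ⟨β, hβ, hangle⟩ := exists_forall_angle_le_of_forall_norm_sq_le_inner hbdd h0 hp_ne
      fun v hv ↦ hp v (subset_convexHull ℝ S hv)
    refine ⟨‖p‖⁻¹ • p, norm_smul_inv_norm hp_ne, β, hβ, fun v hv ↦ ?_⟩
    rw [angle_smul_right_of_pos _ _ (by positivity)]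
    exact hangle v hv
  · rintro ⟨w, -, β, ⟨-, hβ⟩, hangle⟩
    refine zero_notMem_convexHull_of_forall_inner_pos (w := w) fun v hv ↦ ?_
    rw [real_inner_comm]
    exact inner_pos_of_angle_lt_pi_div_two ((hangle v hv).trans_lt hβ)

end InnerProductSpace

/-- For a nonempty compact set `S` of unit vectors, `0 ∉ convexHull ℝ S` if and only if `S`
is contained in some acute cone: there are a unit vector `w` and `β ∈ [0, π/2)` with
`angle(v, w) ≤ β` for all `v ∈ S`. -/
theorem stmt17 {E : Type*} [NormedAddCommGroup E] [InnerProductSpace ℝ E]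
    [FiniteDimensional ℝ E]
    (S : Set E) (hSne : S.Nonempty) (hSc : IsCompact S) (hS : ∀ v ∈ S, ‖v‖ = 1) :
    (0 : E) ∉ convexHull ℝ S ↔
      ∃ w : E, ‖w‖ = 1 ∧ ∃ β ∈ Set.Ico (0 : ℝ) (π / 2),
        ∀ v ∈ S, InnerProductGeometry.angle v w ≤ β :=
  stmt17_general hSne hSc.isBounded (isCompact_convexHull_of_finiteDimensional hSc).isComplete
    fun h0 ↦ by simpa using hS 0 h0
end
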